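/- Let p and q be positive integers and let s be a real number with s > 1. Then T(p,s,q;−i,−1) = (−1)^p Σ_{l=0}^{p} (−1)^l Λ(l;−i) C(p+q−1−l, q−1) φ(s+p+q−l) + (−1)^p Σ_{l=0}^{q} Λ(l;−i) C(p+q−1−l, p−1) φ(s+p+q−l; −1/4), where C(n,k) denotes the binomial coefficient. -/

import Mathlib

open Complex Finset

/-- `φ(s) = (2^{1-s} - 1) ζ(s)`. -/
noncomputable def phi (s : ℂ) : ℂ := ((2 : ℂ) ^ ((1 : ℂ) - s) - 1) * riemannZeta s

/-- The Lerch value `φ(w;-1/4) = Σ_{m ≥ 1} (-i)^m m^{-w}`. -/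
noncomputable def phiNegQuarter (w : ℂ) : ℂ :=
  ∑' m : ℕ, (-Complex.I) ^ (m + 1) / (((m + 1 : ℕ) : ℂ)) ^ w

/-- The primitive Dirichlet character of conductor 4 with values in `ℂ`. -/
noncomputable def chi4 : DirichletCharacter ℂ 4 := ZMod.χ₄.ringHomComp (Int.castRingHom ℂ)

/-- `L(s,χ₄)`, equal to `Σ_{m ≥ 0} (-1)^m (2m+1)^{-s}` at the relevant arguments. -/
noncomputable def Lchi4 (s : ℂ) : ℂ := DirichletCharacter.LFunction chi4 s

/-- `Λ(ξ;-i)`: equal to `2^{1-ξ}(2^{1-ξ}-1)ζ(ξ)` for even `ξ`, and to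
`-2i L(ξ,χ₄)` for odd `ξ`. -/
noncomputable def LamNegI (ξ : ℕ) : ℂ :=
  if Even ξ then (2 : ℂ) ^ ((1 : ℤ) - ξ) * ((2 : ℂ) ^ ((1 : ℤ) - ξ) - 1) * riemannZeta ξ
  else -(2 * Complex.I * Lchi4 ξ)

/-- `T(p,s,q;x,y) = Σ_{l ≠ 0, m ≥ 1, l+m ≠ 0} x^l y^m / (l^p m^s (l+m)^q)`. -/
noncomputable def T (p : ℕ) (s : ℂ) (q : ℕ) (x y : ℂ) : ℂ :=
  ∑' lm : ℤ × ℕ,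
    if lm.1 ≠ 0 ∧ lm.1 + ((lm.2 : ℤ) + 1) ≠ 0 then
      x ^ lm.1 * y ^ (lm.2 + 1) /
        ((lm.1 : ℂ) ^ p * (((lm.2 + 1 : ℕ) : ℂ)) ^ s *
          (((lm.1 + (lm.2 : ℤ) + 1 : ℤ) : ℂ)) ^ q)
    else 0

/-!
For fixed `m ≥ 1`, partial fractions turn `x ^ l / (l ^ p * (l + m) ^ q)` into a combination of
`x ^ l / l ^ j` and `x ^ l / (l + m) ^ j`. The terms with `j = 1` are only conditionally summable
over `l`, so sums over `ℤ` are taken along the intervals `[-N, N]`, where shifting `l` by `m` does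
not change the value. The poles `l = 0` and `l = -m`, which `T` omits, are accounted for by a
correction sitting at `j = 0`: it is the regularised value `-1` of `∑ x ^ l`, and this is where
`Λ(0) = -1` comes from. Summing over `m` then yields polylogarithms at `y` and `x⁻¹ * y`.

For `x = -i` the sums over `l` are alternating zeta values or values of `L(·, χ₄)`; at `L(1, χ₄)`
one lets `s` decrease to `1`.
-/

open Filter Topology SummationFilter

section PartialFractions

lemma sum_choose_mul_pow_sub_sum_choose_mul_pow {R : Type*} [CommRing R] {x y : R}
    (hxy : x + y = 1) (a b : ℕ) :
    ∑ i ∈ range (b + 1), ((a + i).choose a : R) * x ^ i -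
      ∑ i ∈ range (b + 1), ((a + 1 + i).choose (a + 1) : R) * y * x ^ i =
      ((b + a + 1).choose b : R) * x ^ (b + 1) := by
  obtain rfl : y = 1 - x := eq_sub_of_add_eq' hxy
  induction b with
  | zero => simp
  | succ b ih =>
    rw [sum_range_succ, sum_range_succ _ (b + 1), add_sub_add_comm, ih,
      show a + 1 + (b + 1) = (b + a + 1) + 1 by ring, show b + 1 + a + 1 = b + a + 1 + 1 by ring,
      show a + (b + 1) = b + a + 1 by ring]
    have hsymm : (b + a + 1).choose (b + 1) = (b + a + 1).choose a :=
      Nat.choose_symm_of_eq_add (by ring)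
    have hsymm' : (b + a + 1).choose (a + 1) = (b + a + 1).choose b :=
      Nat.choose_symm_of_eq_add (by ring)
    rw [Nat.choose_succ_succ _ a, Nat.choose_succ_succ _ b, Nat.succ_eq_add_one, hsymm, hsymm']
    push_cast
    ring

lemma sum_choose_mul_pow_add_sum_choose_mul_pow {R : Type*} [CommRing R] {x y : R}
    (hxy : x + y = 1) (a b : ℕ) :
    x ^ (b + 1) * ∑ i ∈ range (a + 1), ((b + i).choose b : R) * y ^ i +
      y ^ (a + 1) * ∑ i ∈ range (b + 1), ((a + i).choose a : R) * x ^ i = 1 := by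
  induction a with
  | zero =>
    obtain rfl : y = 1 - x := eq_sub_of_add_eq' hxy
    simp [mul_neg_geom_sum]
  | succ a ih =>
    have hstep := sum_choose_mul_pow_sub_sum_choose_mul_pow hxy a b
    rw [sum_range_succ]
    simp only [mul_assoc, mul_left_comm _ y, ← mul_sum] at hstep
    rw [show b + (a + 1) = b + a + 1 by ring]
    linear_combination ih - y ^ (a + 1) * hstep

variable {K : Type*} [Field K]

/-- The principal part of `a⁻ᵖ (a + m)⁻ᑫ` at the pole `a = 0`, with `c j` in place of `a⁻ʲ`. Being
linear in `c`, it can be summed over `a` term by term. The index `j = 0` is included; its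
coefficient continues those of `1 ≤ j ≤ p`. -/
noncomputable def principalPart (p q : ℕ) (m : K) (c : ℕ → K) : K :=
  (-1) ^ p * ∑ j ∈ range (p + 1),
    (-1) ^ j * ((p + q - 1 - j).choose (q - 1) : K) * m⁻¹ ^ (p + q - j) * c j

lemma principalPart_neg (p q : ℕ) (m : K) (c : ℕ → K) :
    principalPart q p (-m) c = (-1) ^ p * ∑ j ∈ range (q + 1),
      ((p + q - 1 - j).choose (p - 1) : K) * m⁻¹ ^ (p + q - j) * c j := by
  rw [principalPart, add_comm q p, mul_sum, mul_sum]
  refine sum_congr rfl fun j hj => ?_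
  have hj : j ≤ q := mem_range_succ_iff.mp hj
  have hsign : (-1 : K) ^ q * (-1) ^ j * (-1) ^ (p + q - j) = (-1) ^ p := by
    rw [← pow_add, ← pow_add, show q + j + (p + q - j) = p + 2 * q by omega, pow_add, pow_mul]
    simp
  rw [inv_neg, neg_pow m⁻¹, ← hsign]
  ring

lemma principalPart_mul_left (p q : ℕ) (m a : K) (c : ℕ → K) :
    principalPart p q m (fun j => a * c j) = a * principalPart p q m c := by
  simp only [principalPart, mul_sum]
  exact sum_congr rfl fun j _ => by ring

variable [DecidableEq K]

/-- The power `a⁻ʲ`, regularised at `j = 0` to be `-1` at `a = 0` and `0` elsewhere. With the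
convention `0⁻¹ = 0`, this is what makes partial fractions hold at the poles as well. -/
noncomputable def regInvPow (a : K) (j : ℕ) : K :=
  if j = 0 then (if a = 0 then -1 else 0) else (a ^ j)⁻¹

lemma principalPart_regInvPow_zero (p q : ℕ) (m : K) :
    principalPart p q m (regInvPow 0) =
      -(((p + q - 1).choose (q - 1) : K) * (-m)⁻¹ ^ p * m⁻¹ ^ q) := by
  rw [principalPart, sum_range_succ', sum_eq_zero fun j _ => by simp [regInvPow], inv_neg,
    neg_pow m⁻¹]
  simp [regInvPow, pow_add]
  ring

lemma pow_mul_principalPart_regInvPow (p q : ℕ) (m : K) {a : K} (ha : a ≠ 0) :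
    a ^ (p + 1) * principalPart (p + 1) (q + 1) m (regInvPow a) =
      m⁻¹ ^ (q + 1) * ∑ i ∈ range (p + 1), ((q + i).choose q : K) * (-a / m) ^ i := by
  rw [principalPart, sum_range_succ', ← sum_range_reflect]
  simp only [regInvPow, Nat.add_eq_zero_iff, one_ne_zero, and_false, if_false, if_true, ha,
    mul_zero, add_zero, mul_sum, Nat.add_sub_cancel]
  refine sum_congr rfl fun i hi => ?_
  have hi : i ≤ p := mem_range_succ_iff.mp hi
  have hsign : (-1 : K) ^ (p + 1) * (-1) ^ (p - i + 1) = (-1) ^ i := by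
    rw [← pow_add, show p + 1 + (p - i + 1) = i + 2 * (p + 1 - i) by omega, pow_add, pow_mul]
    simp
  have hpow : a ^ (p + 1) * (a ^ (p - i + 1))⁻¹ = a ^ i := by
    rw [show p + 1 = i + (p - i + 1) by omega, pow_add, mul_inv_cancel_right₀ (pow_ne_zero _ ha)]
  rw [show p + 1 + (q + 1) - 1 - (p - i + 1) = q + i by omega,
    show p + 1 + (q + 1) - (p - i + 1) = q + 1 + i by omega, neg_div, neg_pow (a / m),
    div_eq_mul_inv, mul_pow, pow_add m⁻¹]
  linear_combination ((q + i).choose q : K) * m⁻¹ ^ (q + 1) * m⁻¹ ^ i *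
    (a ^ (p + 1) * (a ^ (p - i + 1))⁻¹ * hsign + (-1) ^ i * hpow)

lemma principalPart_regInvPow_neg_self (p q : ℕ) {a : K} (ha : a ≠ 0) :
    principalPart (p + 1) (q + 1) (-a) (regInvPow a) =
      ((p + q + 1).choose p : K) * a⁻¹ ^ (p + 1) * (-a)⁻¹ ^ (q + 1) := by
  have hsum : ∑ i ∈ range (p + 1), ((q + i).choose q : K) = (p + q + 1).choose p := by
    rw [← Nat.cast_sum, ← Nat.choose_symm_of_eq_add (show p + q + 1 = q + 1 + p by ring),
      ← Nat.sum_range_add_choose]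
    simp only [add_comm q]
  have h := pow_mul_principalPart_regInvPow p q (-a) ha
  simp only [div_self (neg_ne_zero.mpr ha), one_pow, mul_one, hsum] at h
  rw [← eq_inv_mul_iff_mul_eq₀ (pow_ne_zero _ ha), ← inv_pow] at h
  rw [h]
  ring

lemma principalPart_neg_self_add_principalPart_zero (p q : ℕ) {a : K} (ha : a ≠ 0) :
    principalPart (p + 1) (q + 1) (-a) (regInvPow a) +
      principalPart (q + 1) (p + 1) a (regInvPow 0) = 0 := by
  rw [principalPart_regInvPow_neg_self p q ha, principalPart_regInvPow_zero,
    show q + 1 + (p + 1) - 1 = p + q + 1 by omega, Nat.add_sub_cancel]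
  ring

theorem principalPart_add_principalPart {p q : ℕ} (hp : 0 < p) (hq : 0 < q) {m : K} (hm : m ≠ 0)
    (a : K) :
    principalPart p q m (regInvPow a) + principalPart q p (-m) (regInvPow (a + m)) =
      (a ^ p * (a + m) ^ q)⁻¹ := by
  obtain ⟨p, rfl⟩ := Nat.exists_eq_succ_of_ne_zero hp.ne'
  obtain ⟨q, rfl⟩ := Nat.exists_eq_succ_of_ne_zero hq.ne'
  simp only [Nat.succ_eq_add_one]
  rcases eq_or_ne a 0 with rfl | ha
  · rw [zero_add, add_comm, principalPart_neg_self_add_principalPart_zero q p hm]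
    simp
  rcases eq_or_ne (a + m) 0 with ham | ham
  · obtain rfl : m = -a := eq_neg_of_add_eq_zero_right ham
    rw [neg_neg, add_neg_cancel, principalPart_neg_self_add_principalPart_zero p q ha]
    simp
  have hxy : (a + m) / m + -a / m = 1 := by field_simp; ring
  have ha' := pow_mul_principalPart_regInvPow p q m ha
  have ham' := pow_mul_principalPart_regInvPow q p (-m) ham
  rw [neg_div_neg_eq] at ham'
  refine eq_inv_of_mul_eq_one_right ?_
  calc a ^ (p + 1) * (a + m) ^ (q + 1) *
        (principalPart (p + 1) (q + 1) m (regInvPow a) +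
          principalPart (q + 1) (p + 1) (-m) (regInvPow (a + m)))
      = (a + m) ^ (q + 1) * (m⁻¹ ^ (q + 1) *
          ∑ i ∈ range (p + 1), ((q + i).choose q : K) * (-a / m) ^ i) +
        a ^ (p + 1) * ((-m)⁻¹ ^ (p + 1) *
          ∑ i ∈ range (q + 1), ((p + i).choose p : K) * ((a + m) / m) ^ i) := by
        rw [← ha', ← ham']
        ring
    _ = ((a + m) / m) ^ (q + 1) *
          ∑ i ∈ range (p + 1), ((q + i).choose q : K) * (-a / m) ^ i +
        (-a / m) ^ (p + 1) *
          ∑ i ∈ range (q + 1), ((p + i).choose p : K) * ((a + m) / m) ^ i := by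
        rw [← neg_div_neg_eq (-a), neg_neg, div_pow, div_pow a]
        simp only [div_eq_mul_inv, inv_pow, mul_assoc]
    _ = 1 := sum_choose_mul_pow_add_sum_choose_mul_pow hxy p q

end PartialFractions

section SymmetricSums

variable {E : Type*} [AddCommGroup E] [TopologicalSpace E]

lemma hasSum_symmetricIcc_of_tendsto_add_neg {f : ℤ → E} {a : E} (h0 : f 0 = 0)
    (h : Tendsto (fun N : ℕ => ∑ n ∈ range N, (f n + f (-n))) atTop (𝓝 a)) :
    HasSum f a (symmetricIcc ℤ) := by
  rw [hasSum_symmetricIcc_iff]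
  refine (h.comp (tendsto_add_atTop_nat 1)).congr fun N => ?_
  simp only [Function.comp_apply]
  induction N with
  | zero => simp [h0]
  | succ N ih =>
    rw [sum_range_succ, ih, Nat.cast_succ, Icc_succ_succ, sum_union (by simp), sum_pair (by lia)]
    congr 1
    abel

variable [IsTopologicalAddGroup E]

lemma hasSum_symmetricIcc_add_one {f : ℤ → E} {a : E} (hf : Tendsto f cofinite (𝓝 0))
    (h : HasSum f a (symmetricIcc ℤ)) : HasSum (fun l => f (l + 1)) a (symmetricIcc ℤ) := by
  rw [hasSum_symmetricIcc_iff] at h ⊢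
  have htop : Tendsto (fun N : ℕ => f (N + 1)) atTop (𝓝 0) :=
    hf.comp (Nat.cofinite_eq_atTop ▸ Function.Injective.tendsto_cofinite fun m n hmn => by
      simpa using hmn)
  have htele : ∀ N : ℕ, ∑ l ∈ Icc (-(N : ℤ)) N, f (l + 1) =
      ∑ l ∈ Icc (-(N : ℤ)) N, f l + (f (N + 1) - f (-N)) := by
    intro N
    have h := sum_Ico_int_sub N f
    rw [sum_sub_distrib, sub_eq_iff_eq_add] at h
    rw [sum_Icc_eq_sum_Ico_add _ (by lia), sum_Icc_eq_sum_Ico_add _ (by lia), h]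
    abel
  have hbot : Tendsto (fun N : ℕ => f (-N)) atTop (𝓝 0) :=
    hf.comp (Nat.cofinite_eq_atTop ▸ Function.Injective.tendsto_cofinite fun m n hmn => by
      simpa using hmn)
  simpa only [htele, sub_zero, add_zero] using h.add (htop.sub hbot)

lemma hasSum_symmetricIcc_add_natCast {f : ℤ → E} {a : E} (hf : Tendsto f cofinite (𝓝 0))
    (h : HasSum f a (symmetricIcc ℤ)) (m : ℕ) :
    HasSum (fun l => f (l + m)) a (symmetricIcc ℤ) := by
  induction m with
  | zero => simpa using h
  | succ m ih =>
    have hshift := hf.comp (add_left_injective (m : ℤ)).tendsto_cofinite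
    simpa [add_assoc, add_comm (1 : ℤ)] using hasSum_symmetricIcc_add_one hshift ih

end SymmetricSums

section Evaluation

/-- The polylogarithm `Li_w(z) = ∑_{m ≥ 1} z ^ m / m ^ w`, indexed by `n = m - 1`. -/
noncomputable def polylog (z w : ℂ) : ℂ := ∑' n : ℕ, z ^ (n + 1) / ((n + 1 : ℕ) : ℂ) ^ w

lemma norm_pow_div_natCast_cpow_le {z : ℂ} (hz : ‖z‖ ≤ 1) (w : ℂ) (n : ℕ) :
    ‖z ^ (n + 1) / ((n + 1 : ℕ) : ℂ) ^ w‖ ≤ (((n + 1 : ℕ) : ℝ) ^ w.re)⁻¹ := by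
  rw [norm_div, norm_pow, norm_natCast_cpow_of_pos n.succ_pos, ← one_div]
  gcongr
  exact pow_le_one₀ (norm_nonneg z) hz

lemma hasSum_polylog {z w : ℂ} (hz : ‖z‖ ≤ 1) (hw : 1 < w.re) :
    HasSum (fun n : ℕ => z ^ (n + 1) / ((n + 1 : ℕ) : ℂ) ^ w) (polylog z w) :=
  Summable.hasSum <| .of_norm_bounded
    ((summable_nat_add_iff 1).mpr (Real.summable_nat_rpow_inv.mpr hw))
    (norm_pow_div_natCast_cpow_le hz w)

lemma hasSum_sum_mul_polylog {z s : ℂ} {r N : ℕ} (hrN : r ≤ N) (hz : ‖z‖ ≤ 1)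
    (hs : 1 < s.re) (c : ℕ → ℂ) :
    HasSum (fun n : ℕ => z ^ (n + 1) / ((n + 1 : ℕ) : ℂ) ^ s *
        ∑ j ∈ range (r + 1), c j * ((n + 1 : ℕ) : ℂ)⁻¹ ^ (N - j))
      (∑ j ∈ range (r + 1), c j * polylog z (s + N - j)) := by
  simp only [mul_sum]
  refine hasSum_sum fun j hj => ?_
  have hjN : j ≤ N := (mem_range_succ_iff.mp hj).trans hrN
  have hre : 1 < (s + (N - j : ℕ)).re := by
    rw [add_re, natCast_re]
    exact lt_add_of_lt_of_nonneg hs (Nat.cast_nonneg _)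
  rw [add_sub_assoc, ← Nat.cast_sub hjN]
  refine ((hasSum_polylog hz hre).mul_left (c j)).congr_fun fun n => ?_
  have hn : ((n + 1 : ℕ) : ℂ) ≠ 0 := Nat.cast_ne_zero.mpr n.succ_ne_zero
  rw [cpow_add _ _ hn, cpow_natCast, inv_pow, div_eq_mul_inv, div_eq_mul_inv, mul_inv]
  ring

lemma hasSum_principalPart {ι : Type*} {L : SummationFilter ι} {f : ι → ℕ → ℂ} {c : ℕ → ℂ}
    (h : ∀ j, HasSum (fun i => f i j) (c j) L) (p q : ℕ) (m : ℂ) :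
    HasSum (fun i => principalPart p q m (f i)) (principalPart p q m c) L :=
  (hasSum_sum fun j _ => (h j).mul_left _).mul_left _

lemma tendsto_zpow_mul_regInvPow {x : ℂ} (hx : ‖x‖ = 1) (j : ℕ) :
    Tendsto (fun l : ℤ => x ^ l * regInvPow (l : ℂ) j) cofinite (𝓝 0) := by
  have hinv : Tendsto (fun l : ℤ => ‖(l : ℝ)‖⁻¹) cofinite (𝓝 0) :=
    (tendsto_norm_cocompact_atTop.comp Int.tendsto_coe_cofinite).inv_tendsto_atTop
  refine squeeze_zero_norm' ?_ hinv
  filter_upwards [(Set.finite_singleton (0 : ℤ)).compl_mem_cofinite] with l hl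
  rw [norm_mul, norm_zpow, hx, one_zpow, one_mul, regInvPow]
  split_ifs with hj hl0
  · exact absurd (mod_cast hl0) hl
  · simp
  · rw [norm_inv, norm_pow, norm_intCast, Real.norm_eq_abs]
    have hl1 : 1 ≤ |(l : ℝ)| := mod_cast Int.one_le_abs hl
    gcongr
    exact le_self_pow₀ hl1 hj

lemma norm_inv_pow_mul_pow_le {p q : ℕ} (hp : 0 < p) (hq : 0 < q) (k l : ℤ) :
    ‖((k : ℂ) ^ p * (l : ℂ) ^ q)⁻¹‖ ≤ ((k : ℝ) ^ 2)⁻¹ + ((l : ℝ) ^ 2)⁻¹ := by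
  have hle : ∀ (k : ℤ) {r : ℕ}, 0 < r → |(k : ℝ)|⁻¹ ^ r ≤ |(k : ℝ)|⁻¹ := fun k r hr => by
    refine pow_le_of_le_one (by positivity) ?_ hr.ne'
    rcases eq_or_ne k 0 with rfl | hk
    · simp
    · exact inv_le_one_of_one_le₀ (mod_cast Int.one_le_abs hk)
  calc ‖((k : ℂ) ^ p * (l : ℂ) ^ q)⁻¹‖ = |(k : ℝ)|⁻¹ ^ p * |(l : ℝ)|⁻¹ ^ q := by
        simp [mul_comm]
    _ ≤ |(k : ℝ)|⁻¹ * |(l : ℝ)|⁻¹ := by gcongr <;> exact hle _ ‹_›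
    _ ≤ |(k : ℝ)|⁻¹ ^ 2 + |(l : ℝ)|⁻¹ ^ 2 := by
        nlinarith [sq_nonneg (|(k : ℝ)|⁻¹ - |(l : ℝ)|⁻¹), sq_nonneg (|(k : ℝ)|⁻¹ + |(l : ℝ)|⁻¹)]
    _ = ((k : ℝ) ^ 2)⁻¹ + ((l : ℝ) ^ 2)⁻¹ := by simp only [inv_pow, sq_abs]

lemma summable_zpow_mul_pow_div {x y s : ℂ} (hx : ‖x‖ = 1) (hy : ‖y‖ ≤ 1) (hs : 1 < s.re)
    {p q : ℕ} (hp : 0 < p) (hq : 0 < q) :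
    Summable fun ln : ℤ × ℕ => y ^ (ln.2 + 1) / ((ln.2 + 1 : ℕ) : ℂ) ^ s *
      (x ^ ln.1 / ((ln.1 : ℂ) ^ p * (ln.1 + (ln.2 + 1 : ℕ) : ℂ) ^ q)) := by
  let u : ℤ → ℝ := fun l => ((l : ℝ) ^ 2)⁻¹
  let v : ℕ → ℝ := fun n => (((n + 1 : ℕ) : ℝ) ^ s.re)⁻¹
  have hu : Summable u := by simpa [u] using Real.summable_one_div_int_pow.mpr one_lt_two
  have hv : Summable v := (summable_nat_add_iff 1).mpr (Real.summable_nat_rpow_inv.mpr hs)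
  have huv : Summable fun ln : ℤ × ℕ => u ln.1 * v ln.2 :=
    hu.mul_of_nonneg hv (fun _ => by positivity) (fun _ => by positivity)
  have hshear : Function.Injective fun ln : ℤ × ℕ => (ln.1 + (ln.2 + 1 : ℕ), ln.2) := by
    rintro ⟨l, n⟩ ⟨l', n'⟩ h
    simp only [Prod.mk.injEq] at h ⊢
    lia
  refine .of_norm_bounded (huv.add (huv.comp_injective hshear)) fun ⟨l, n⟩ => ?_
  have hx' : ‖x ^ l / ((l : ℂ) ^ p * (l + (n + 1 : ℕ) : ℂ) ^ q)‖ ≤ u l + u (l + (n + 1 : ℕ)) := by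
    rw [norm_div, norm_zpow, hx, one_zpow, one_div, ← norm_inv]
    simpa [u] using norm_inv_pow_mul_pow_le hp hq l (l + (n + 1 : ℕ))
  calc _ ≤ v n * (u l + u (l + (n + 1 : ℕ))) := by
        rw [norm_mul]
        gcongr
        exact norm_pow_div_natCast_cpow_le hy s n
    _ = _ := by simp only [Function.comp_apply]; ring

lemma summable_zpow_div_pow_mul_add_pow {x : ℂ} (hx : ‖x‖ = 1) {p q : ℕ} (hp : 0 < p)
    (hq : 0 < q) (m : ℕ) :
    Summable fun l : ℤ => x ^ l / ((l : ℂ) ^ p * (l + m : ℂ) ^ q) := by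
  have hu : Summable fun l : ℤ => ((l : ℝ) ^ 2)⁻¹ := by
    simpa using Real.summable_one_div_int_pow.mpr one_lt_two
  refine .of_norm_bounded (hu.add (hu.comp_injective (add_left_injective (m : ℤ)))) fun l => ?_
  rw [norm_div, norm_zpow, hx, one_zpow, one_div, ← norm_inv]
  simpa using norm_inv_pow_mul_pow_le hp hq l (l + m)

lemma T_eq_tsum_tsum {x y s : ℂ} (hx : ‖x‖ = 1) (hy : ‖y‖ ≤ 1) (hs : 1 < s.re)
    {p q : ℕ} (hp : 0 < p) (hq : 0 < q) :
    T p s q x y = ∑' n : ℕ, y ^ (n + 1) / ((n + 1 : ℕ) : ℂ) ^ s *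
      ∑' l : ℤ, x ^ l / ((l : ℂ) ^ p * (l + (n + 1 : ℕ) : ℂ) ^ q) := by
  have hsum := summable_zpow_mul_pow_div hx hy hs hp hq
  have hcomm := Summable.tsum_comm (f := fun (l : ℤ) (n : ℕ) =>
    y ^ (n + 1) / ((n + 1 : ℕ) : ℂ) ^ s * (x ^ l / ((l : ℂ) ^ p * (l + (n + 1 : ℕ) : ℂ) ^ q))) hsum
  calc T p s q x y = ∑' ln : ℤ × ℕ, y ^ (ln.2 + 1) / ((ln.2 + 1 : ℕ) : ℂ) ^ s *
        (x ^ ln.1 / ((ln.1 : ℂ) ^ p * (ln.1 + (ln.2 + 1 : ℕ) : ℂ) ^ q)) := by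
        refine tsum_congr fun ⟨l, n⟩ => ?_
        split_ifs with h
        · push_cast
          ring
        · rw [not_and_or, not_not, not_not] at h
          rcases h with rfl | h
          · simp [hp.ne']
          · have h' : (l : ℂ) + (n + 1 : ℕ) = 0 := mod_cast h
            rw [h', zero_pow hq.ne']; simp
    _ = _ := by
        rw [hsum.tsum_prod]
        simp only [tsum_mul_left, ← hcomm]

lemma tsum_zpow_div_pow_mul_add_pow {x : ℂ} (hx : ‖x‖ = 1) {Λ : ℕ → ℂ}
    (hΛ : ∀ j, HasSum (fun l : ℤ => x ^ l * regInvPow (l : ℂ) j) (Λ j) (symmetricIcc ℤ))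
    {p q m : ℕ} (hp : 0 < p) (hq : 0 < q) (hm : m ≠ 0) :
    ∑' l : ℤ, x ^ l / ((l : ℂ) ^ p * (l + m : ℂ) ^ q) =
      principalPart p q (m : ℂ) Λ + x⁻¹ ^ m * principalPart q p (-m : ℂ) Λ := by
  have hx0 : x ≠ 0 := norm_ne_zero_iff.mp (hx ▸ one_ne_zero)
  have hshift : ∀ j, HasSum (fun l : ℤ => x ^ (l + m) * regInvPow (l + m : ℂ) j) (Λ j)
      (symmetricIcc ℤ) := fun j => by
    simpa using hasSum_symmetricIcc_add_natCast (tendsto_zpow_mul_regInvPow hx j) (hΛ j) m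
  rw [← tsum_eq_of_summable_unconditional (L := symmetricIcc ℤ)
    (summable_zpow_div_pow_mul_add_pow hx hp hq m)]
  refine HasSum.tsum_eq (((hasSum_principalPart hΛ p q _).add
    ((hasSum_principalPart hshift q p (-m)).mul_left (x⁻¹ ^ m))).congr_fun fun l => ?_)
  rw [principalPart_mul_left, principalPart_mul_left, ← mul_assoc, zpow_add₀ hx0, zpow_natCast,
    mul_left_comm, inv_pow, inv_mul_cancel₀ (pow_ne_zero _ hx0), mul_one, ← mul_add,
    principalPart_add_principalPart hp hq (Nat.cast_ne_zero.mpr hm), div_eq_mul_inv]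

lemma hasSum_mul_principalPart {z s : ℂ} (hz : ‖z‖ ≤ 1) (hs : 1 < s.re) (Λ : ℕ → ℂ) (p q : ℕ) :
    HasSum (fun n : ℕ => z ^ (n + 1) / ((n + 1 : ℕ) : ℂ) ^ s *
        principalPart p q ((n + 1 : ℕ) : ℂ) Λ)
      ((-1) ^ p * ∑ j ∈ range (p + 1), (-1) ^ j * Λ j * ((p + q - 1 - j).choose (q - 1) : ℂ) *
        polylog z (s + p + q - j)) := by
  have h := hasSum_sum_mul_polylog (Nat.le_add_right p q) hz hs
    fun j => (-1) ^ j * Λ j * ((p + q - 1 - j).choose (q - 1) : ℂ)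
  simp only [Nat.cast_add p q, ← add_assoc s] at h
  refine (h.mul_left ((-1) ^ p)).congr_fun fun n => ?_
  rw [principalPart, mul_left_comm]
  congr! 2
  exact sum_congr rfl fun j _ => by ring

lemma hasSum_mul_principalPart_neg {z s : ℂ} (hz : ‖z‖ ≤ 1) (hs : 1 < s.re) (Λ : ℕ → ℂ)
    (p q : ℕ) :
    HasSum (fun n : ℕ => z ^ (n + 1) / ((n + 1 : ℕ) : ℂ) ^ s *
        principalPart q p (-(n + 1 : ℕ) : ℂ) Λ)
      ((-1) ^ p * ∑ j ∈ range (q + 1), Λ j * ((p + q - 1 - j).choose (p - 1) : ℂ) *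
        polylog z (s + p + q - j)) := by
  have h := hasSum_sum_mul_polylog (Nat.le_add_left q p) hz hs
    fun j => Λ j * ((p + q - 1 - j).choose (p - 1) : ℂ)
  simp only [Nat.cast_add p q, ← add_assoc s] at h
  refine (h.mul_left ((-1) ^ p)).congr_fun fun n => ?_
  rw [principalPart_neg, mul_left_comm]
  congr! 2
  exact sum_congr rfl fun j _ => by ring

theorem T_eq_of_hasSum_zpow_mul_regInvPow {x y s : ℂ} (hx : ‖x‖ = 1) (hy : ‖y‖ ≤ 1)
    (hs : 1 < s.re) {Λ : ℕ → ℂ}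
    (hΛ : ∀ j, HasSum (fun l : ℤ => x ^ l * regInvPow (l : ℂ) j) (Λ j) (symmetricIcc ℤ))
    {p q : ℕ} (hp : 0 < p) (hq : 0 < q) :
    T p s q x y =
      (-1) ^ p * ∑ j ∈ range (p + 1), (-1) ^ j * Λ j * ((p + q - 1 - j).choose (q - 1) : ℂ) *
        polylog y (s + p + q - j) +
      (-1) ^ p * ∑ j ∈ range (q + 1), Λ j * ((p + q - 1 - j).choose (p - 1) : ℂ) *
        polylog (x⁻¹ * y) (s + p + q - j) := by
  have hxy : ‖x⁻¹ * y‖ ≤ 1 := by rwa [norm_mul, norm_inv, hx, inv_one, one_mul]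
  rw [T_eq_tsum_tsum hx hy hs hp hq]
  refine HasSum.tsum_eq (((hasSum_mul_principalPart hy hs Λ p q).add
    (hasSum_mul_principalPart_neg hxy hs Λ p q)).congr_fun fun n => ?_)
  rw [tsum_zpow_div_pow_mul_add_pow hx hΛ (m := n + 1) hp hq n.succ_ne_zero, mul_pow]
  ring

end Evaluation

section LambdaValues

lemma hasSum_neg_one_pow_div_cpow {w : ℂ} (hw : 1 < w.re) :
    HasSum (fun n : ℕ => (-1) ^ n / (n : ℂ) ^ w) (phi w) := by
  have hζ : HasSum (fun n : ℕ => 1 / (n : ℂ) ^ w) (riemannZeta w) := by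
    rw [zeta_eq_tsum_one_div_nat_cpow hw]
    exact (Complex.summable_one_div_nat_cpow.mpr hw).hasSum
  have heven : HasSum (fun n : ℕ => 1 / ((2 * n : ℕ) : ℂ) ^ w) (2 ^ (-w) * riemannZeta w) := by
    refine (hζ.mul_left (2 ^ (-w))).congr_fun fun n => ?_
    rw [Nat.cast_mul, natCast_mul_natCast_cpow, cpow_neg, one_div, mul_inv, one_div, Nat.cast_two]
  have hodd : HasSum (fun n : ℕ => 1 / ((2 * n + 1 : ℕ) : ℂ) ^ w)
      (riemannZeta w - 2 ^ (-w) * riemannZeta w) := by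
    have h := (hζ.summable.comp_injective (i := fun n => 2 * n + 1)
      (fun a b h => by simpa using h)).hasSum
    have hadd := (HasSum.even_add_odd (f := fun n : ℕ => 1 / (n : ℂ) ^ w) heven h).unique hζ
    rwa [eq_sub_of_add_eq' hadd] at h
  have hphi : phi w = 2 ^ (-w) * riemannZeta w + -(riemannZeta w - 2 ^ (-w) * riemannZeta w) := by
    rw [phi, sub_eq_add_neg 1 w, cpow_add _ _ two_ne_zero, cpow_one]
    ring
  rw [hphi]
  refine HasSum.even_add_odd (heven.congr_fun fun n => ?_) (hodd.neg.congr_fun fun n => ?_)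
  · rw [pow_mul, neg_one_sq, one_pow]
  · rw [pow_succ, pow_mul, neg_one_sq, one_pow, one_mul, neg_div]

lemma phi_eq_polylog {w : ℂ} (hw : 1 < w.re) : phi w = polylog (-1) w := by
  have hw0 : w ≠ 0 := by
    rintro rfl
    norm_num at hw
  rw [polylog, ← (hasSum_neg_one_pow_div_cpow hw).tsum_eq,
    (hasSum_neg_one_pow_div_cpow hw).summable.tsum_eq_zero_add]
  simp [zero_cpow hw0]

lemma tendsto_alternating_series_of_tendsto {ι : Type*} {F : Filter ι} [F.NeBot]
    {a : ι → ℕ → ℝ} {L : ι → ℝ} {b : ℕ → ℝ} {l : ℝ} (ha : ∀ᶠ s in F, Antitone (a s))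
    (hL : ∀ᶠ s in F, Tendsto (fun N => ∑ n ∈ range N, (-1) ^ n * a s n) atTop (𝓝 (L s)))
    (hab : ∀ n, Tendsto (fun s => a s n) F (𝓝 (b n))) (hLl : Tendsto L F (𝓝 l))
    (hb : Tendsto b atTop (𝓝 0)) :
    Tendsto (fun N => ∑ n ∈ range N, (-1) ^ n * b n) atTop (𝓝 l) := by
  have hanti : Antitone b := fun m n hmn =>
    le_of_tendsto_of_tendsto (hab n) (hab m) (ha.mono fun s hs => hs hmn)
  have hpartial : ∀ N, Tendsto (fun s => ∑ n ∈ range N, (-1) ^ n * a s n) F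
      (𝓝 (∑ n ∈ range N, (-1) ^ n * b n)) := fun N =>
    tendsto_finsetSum _ fun n _ => (hab n).const_mul _
  obtain ⟨c, hc⟩ := hanti.tendsto_alternating_series_of_tendsto_zero hb
  -- Consecutive partial sums bracket `L s`, so no uniformity in `s` is needed.
  have hle : c ≤ l := le_of_tendsto' (hc.comp (tendsto_id.const_mul_atTop' two_pos)) fun k =>
    le_of_tendsto_of_tendsto (hpartial _) hLl (by
      filter_upwards [ha, hL] with s has hLs using has.alternating_series_le_tendsto hLs k)
  have hge : l ≤ c := ge_of_tendsto'
      (hc.comp ((tendsto_add_atTop_nat 1).comp (tendsto_id.const_mul_atTop' two_pos))) fun k =>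
    le_of_tendsto_of_tendsto hLl (hpartial _) (by
      filter_upwards [ha, hL] with s has hLs using has.tendsto_le_alternating_series hLs k)
  rwa [← le_antisymm hle hge]

lemma chi4_two_mul (k : ℕ) : chi4 ((2 * k : ℕ) : ZMod 4) = 0 := by
  rw [chi4, MulChar.ringHomComp_apply, ZMod.χ₄_nat_eq_if_mod_four, if_pos (by lia), map_zero]

lemma chi4_two_mul_add_one (k : ℕ) : chi4 ((2 * k + 1 : ℕ) : ZMod 4) = (-1) ^ k := by
  rw [chi4, MulChar.ringHomComp_apply, ZMod.χ₄_eq_neg_one_pow (by lia),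
    show (2 * k + 1) / 2 = k by lia]
  simp

lemma hasSum_Lchi4 {s : ℂ} (hs : 1 < s.re) :
    HasSum (fun n : ℕ => (-1) ^ n * ((2 * n + 1 : ℕ) : ℂ) ^ (-s)) (Lchi4 s) := by
  have hL : HasSum (LSeries.term (fun n => chi4 n) s) (Lchi4 s) := by
    rw [Lchi4, DirichletCharacter.LFunction_eq_LSeries chi4 hs]
    exact (DirichletCharacter.LSeriesSummable_of_one_lt_re chi4 hs).LSeriesHasSum
  have hinj : Function.Injective fun n : ℕ => 2 * n + 1 := fun a b h => by simpa using h
  have hsupp : ∀ n ∉ Set.range fun n : ℕ => 2 * n + 1,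
      LSeries.term (fun n => chi4 n) s n = 0 := by
    intro n hn
    rcases Nat.even_or_odd' n with ⟨k, rfl | rfl⟩
    · rw [LSeries.term_def, chi4_two_mul, zero_div, ite_self]
    · exact absurd ⟨k, rfl⟩ hn
  refine ((hinj.hasSum_iff hsupp).mpr hL).congr_fun fun n => ?_
  rw [Function.comp_apply, LSeries.term_of_ne_zero (Nat.succ_ne_zero _), chi4_two_mul_add_one,
    cpow_neg, div_eq_mul_inv]

lemma continuous_Lchi4 : Continuous Lchi4 := by
  have hchi : chi4 ≠ 1 := fun h => by
    have h3 := chi4_two_mul_add_one 1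
    rw [h, MulChar.one_apply (by decide)] at h3
    norm_num at h3
  exact (DirichletCharacter.differentiable_LFunction hchi).continuous

lemma hasSum_Lchi4_ofReal {s : ℝ} (hs : 1 < s) :
    HasSum (fun n : ℕ => (((-1) ^ n * ((2 * n + 1 : ℕ) : ℝ) ^ (-s) : ℝ) : ℂ)) (Lchi4 s) :=
  (hasSum_Lchi4 (s := s) hs).congr_fun fun n => by
    rw [ofReal_mul, ofReal_cpow (Nat.cast_nonneg _)]
    simp

lemma tendsto_sum_range_Lchi4 {σ : ℝ} (hσ : 1 ≤ σ) :
    Tendsto (fun N => ((∑ n ∈ range N, (-1) ^ n * ((2 * n + 1 : ℕ) : ℝ) ^ (-σ) : ℝ) : ℂ)) atTop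
      (𝓝 (Lchi4 σ)) := by
  have hgt : ∀ᶠ s in 𝓝[>] σ, 1 < s :=
    eventually_mem_nhdsWithin.mono fun s hs => hσ.trans_lt hs
  have hcont : Tendsto (fun s : ℝ => Lchi4 s) (𝓝[>] σ) (𝓝 (Lchi4 σ)) :=
    (continuous_Lchi4.comp continuous_ofReal).continuousWithinAt
  have him : (Lchi4 σ).im = 0 := by
    refine tendsto_nhds_unique ((continuous_im.tendsto _).comp hcont)
      (tendsto_const_nhds.congr' (hgt.mono fun s hs => ?_))
    simpa using hasSum_zero.unique (hasSum_im (hasSum_Lchi4_ofReal hs))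
  have hre : Tendsto (fun N => ∑ n ∈ range N, (-1) ^ n * ((2 * n + 1 : ℕ) : ℝ) ^ (-σ)) atTop
      (𝓝 (Lchi4 σ).re) := by
    refine tendsto_alternating_series_of_tendsto (F := 𝓝[>] σ) ?_
      (hgt.mono fun s hs => (hasSum_re (hasSum_Lchi4_ofReal hs)).tendsto_sum_nat) (fun n => ?_)
      ((continuous_re.tendsto _).comp hcont) ?_
    · filter_upwards [hgt] with s hs m n hmn
      refine Real.rpow_le_rpow_of_nonpos (by positivity) ?_ (by linarith)
      gcongr
    · exact ((Real.continuous_const_rpow (by positivity)).comp continuous_neg).continuousWithinAt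
    · have hodd : Tendsto (fun n => 2 * n + 1) atTop (atTop : Filter ℕ) :=
        tendsto_atTop_mono (fun n => show n ≤ 2 * n + 1 by lia) tendsto_id
      exact (tendsto_rpow_neg_atTop (by linarith)).comp (tendsto_natCast_atTop_atTop.comp hodd)
  rw [show Lchi4 σ = ((Lchi4 σ).re : ℂ) from Complex.ext rfl him]
  exact (continuous_ofReal.tendsto _).comp hre

lemma LamNegI_zero : LamNegI 0 = -1 := by
  simp [LamNegI, riemannZeta_zero]
  norm_num

lemma sum_range_eq_sum_range_half {M : Type*} [AddCommMonoid M] {f : ℕ → M}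
    (hf : ∀ k, f (2 * k) = 0) (N : ℕ) :
    ∑ n ∈ range N, f n = ∑ k ∈ range (N / 2), f (2 * k + 1) := by
  induction N using Nat.twoStepInduction with
  | zero => rfl
  | one => simpa using hf 0
  | more N ih _ =>
    rw [sum_range_succ, sum_range_succ, ih, Nat.add_div_right _ two_pos, sum_range_succ, add_assoc]
    congr 1
    rcases Nat.even_or_odd' N with ⟨k, rfl | rfl⟩
    · rw [hf, zero_add, Nat.mul_div_cancel_left _ two_pos]
    · rw [show 2 * k + 1 + 1 = 2 * (k + 1) by ring, hf, add_zero, Nat.mul_add_div two_pos]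
      rfl

lemma zpow_mul_regInvPow_add_neg (x : ℂ) {j : ℕ} (hj : j ≠ 0) (n : ℕ) :
    x ^ (n : ℤ) * regInvPow ((n : ℤ) : ℂ) j + x ^ (-n : ℤ) * regInvPow ((-n : ℤ) : ℂ) j =
      (x ^ n + (-1) ^ j * x⁻¹ ^ n) * ((n : ℂ) ^ j)⁻¹ := by
  rw [regInvPow, regInvPow, if_neg hj, if_neg hj, Int.cast_neg, neg_pow, mul_inv, ← inv_pow (-1),
    inv_neg_one, zpow_neg, zpow_natCast, Int.cast_natCast, inv_pow]
  ring

lemma hasSum_zpow_mul_regInvPow_zero (x : ℂ) :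
    HasSum (fun l : ℤ => x ^ l * regInvPow (l : ℂ) 0) (-1) (symmetricIcc ℤ) := by
  refine (hasSum_ite_eq (0 : ℤ) (-1 : ℂ) (symmetricIcc ℤ)).congr_fun fun l => ?_
  rcases eq_or_ne l 0 with rfl | hl <;> simp [regInvPow, *]

lemma hasSum_zpow_mul_regInvPow_of_even {j : ℕ} (hj : Even j) (hj0 : j ≠ 0) :
    HasSum (fun l : ℤ => (-I) ^ l * regInvPow (l : ℂ) j)
      (2 ^ (1 - j : ℤ) * phi j) (symmetricIcc ℤ) := by
  have hj1 : 1 < (j : ℂ).re := by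
    obtain ⟨k, rfl⟩ := hj
    rw [natCast_re]
    norm_cast
    lia
  refine hasSum_symmetricIcc_of_tendsto_add_neg (by simp [regInvPow, hj0])
    (HasSum.tendsto_sum_nat ?_)
  simp only [zpow_mul_regInvPow_add_neg _ hj0, hj.neg_one_pow, one_mul, inv_neg, inv_I, neg_neg]
  rw [← add_zero (2 ^ _ * _)]
  refine HasSum.even_add_odd (((hasSum_neg_one_pow_div_cpow hj1).mul_left _).congr_fun fun n => ?_)
    (hasSum_zero.congr_fun fun n => ?_)
  · rw [pow_mul, pow_mul, neg_sq, I_sq, cpow_natCast, zpow_sub₀ two_ne_zero, zpow_one,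
      zpow_natCast, Nat.cast_mul, mul_pow, Nat.cast_two, mul_inv]
    ring
  · rw [Odd.neg_pow ⟨n, rfl⟩, neg_add_cancel, zero_mul]

lemma hasSum_zpow_mul_regInvPow_of_odd {j : ℕ} (hj : Odd j) :
    HasSum (fun l : ℤ => (-I) ^ l * regInvPow (l : ℂ) j) (-(2 * I * Lchi4 j)) (symmetricIcc ℤ) := by
  have hj0 : j ≠ 0 := hj.pos.ne'
  have hpair : ∀ k, ((-I) ^ (2 * k + 1) - I ^ (2 * k + 1)) = -(2 * I) * (-1) ^ k := by
    intro k
    rw [Odd.neg_pow ⟨k, rfl⟩, pow_succ, pow_mul, I_sq]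
    ring
  refine hasSum_symmetricIcc_of_tendsto_add_neg (by simp [regInvPow, hj0]) ?_
  simp only [zpow_mul_regInvPow_add_neg _ hj0, hj.neg_one_pow, neg_one_mul, inv_neg, inv_I, neg_neg,
    ← sub_eq_add_neg]
  have hlim := ((tendsto_sum_range_Lchi4 (σ := j) (mod_cast hj.pos)).comp
    (Nat.tendsto_div_const_atTop two_ne_zero)).const_mul (-(2 * I))
  rw [neg_mul] at hlim
  refine hlim.congr fun N => ?_
  rw [sum_range_eq_sum_range_half fun k => by simp [pow_mul], Function.comp_apply, ofReal_sum,
    mul_sum]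
  refine sum_congr rfl fun k _ => ?_
  rw [hpair, Real.rpow_neg (Nat.cast_nonneg _), Real.rpow_natCast]
  push_cast
  ring

lemma hasSum_LamNegI (j : ℕ) :
    HasSum (fun l : ℤ => (-I) ^ l * regInvPow (l : ℂ) j) (LamNegI j) (symmetricIcc ℤ) := by
  rcases eq_or_ne j 0 with rfl | hj0
  · rw [LamNegI_zero]
    exact hasSum_zpow_mul_regInvPow_zero _
  rcases Nat.even_or_odd j with hj | hj
  · rw [LamNegI, if_pos hj, mul_assoc]
    have hphi : phi j = ((2 : ℂ) ^ (1 - j : ℤ) - 1) * riemannZeta j := by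
      rw [phi, ← cpow_intCast]
      push_cast
      rfl
    exact hphi ▸ hasSum_zpow_mul_regInvPow_of_even hj hj0
  · rw [LamNegI, if_neg (Nat.not_even_iff_odd.mpr hj)]
    exact hasSum_zpow_mul_regInvPow_of_odd hj

end LambdaValues

theorem T_eval_negI_negone_general {p q : ℕ} (hp : 0 < p) (hq : 0 < q) {s : ℂ} (hs : 1 < s.re) :
    T p s q (-Complex.I) (-1) =
      (-1 : ℂ) ^ p * ∑ l ∈ range (p + 1), (-1 : ℂ) ^ l * LamNegI l *
          (Nat.choose (p + q - 1 - l) (q - 1) : ℂ) *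
          phi (s + p + q - l) +
      (-1 : ℂ) ^ p * ∑ l ∈ range (q + 1), LamNegI l *
          (Nat.choose (p + q - 1 - l) (p - 1) : ℂ) *
          phiNegQuarter (s + p + q - l) := by
  have hx : (-I)⁻¹ * -1 = -I := by rw [inv_neg, inv_I, neg_neg, mul_neg_one]
  have hphi : ∀ l ∈ range (p + 1), polylog (-1) (s + p + q - l) = phi (s + p + q - l) := by
    intro l hl
    have hlp : (l : ℝ) ≤ p := mod_cast mem_range_succ_iff.mp hl
    refine (phi_eq_polylog ?_).symm
    simp only [sub_re, add_re, natCast_re]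
    linarith [q.cast_nonneg (α := ℝ)]
  have hphiNegQuarter : ∀ w, polylog (-I) w = phiNegQuarter w := fun _ => rfl
  rw [T_eq_of_hasSum_zpow_mul_regInvPow (by simp) (by simp) hs hasSum_LamNegI hp hq, hx]
  simp only [hphiNegQuarter]
  rw [sum_congr rfl fun l hl => by rw [hphi l hl]]

/-- Evaluation of `T(p,s,q;-i,-1)` in terms of `Λ(·;-i)`, `φ` and Lerch values
(Lemma 6.2, second formula, of Komori–Matsumoto–Tsumura). -/
theorem T_eval_negI_negone (p q : ℕ) (hp : 0 < p) (hq : 0 < q) (s : ℝ) (hs : 1 < s) :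
    T p (s : ℂ) q (-Complex.I) (-1) =
      (-1 : ℂ) ^ p * ∑ l ∈ range (p + 1), (-1 : ℂ) ^ l * LamNegI l *
          (Nat.choose (p + q - 1 - l) (q - 1) : ℂ) *
          phi ((s : ℂ) + p + q - l) +
      (-1 : ℂ) ^ p * ∑ l ∈ range (q + 1), LamNegI l *
          (Nat.choose (p + q - 1 - l) (p - 1) : ℂ) *
          phiNegQuarter ((s : ℂ) + p + q - l) :=
  T_eval_negI_negone_general (s := s) hp hq hs
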